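/- arXiv:1904.08592 — 2 statements merged into one kernel-verified Lean document; each statement's English description precedes it below -/
import Mathlib

section
/- For all real numbers λ, x and all positive integers n, k, one has 2^k · B_{k,n+k}(x|λ) = C(n+k,n) · (x)_{k,λ} · Σ_{l=0}^{k} C(k,l) ℰ^{(k)}_{n,λ}(1−x+l). -/
/-!
Work with exponential generating functions as formal power series over `ℝ`. Let `F x` and `E` be
those of `(x)_{n,λ}` and `ℰ_{n,λ}`. The Vandermonde identity gives `F (x + y) = F x * F y`, hence
`F (y + l) = F y * F 1 ^ l`; the recursion for the degenerate Euler numbers is `E * (F 1 + 1) = 2`;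
and `ℰ^{(k)}_{n,λ}(y)` has generating function `E ^ k * F y`. By the binomial theorem
`∑ₗ C(k,l) E ^ k * F (y + l) = F y * (E * (F 1 + 1)) ^ k = 2 ^ k * F y`,
and comparing coefficients at `y = 1 - x` gives the theorem.
-/

open Finset

/-- λ-falling factorial: `(x)_{n,λ} = x(x-λ)⋯(x-(n-1)λ)`. -/
noncomputable def fallFac (lam x : ℝ) : ℕ → ℝ
  | 0 => 1
  | n + 1 => fallFac lam x n * (x - n * lam)

/-- Degenerate Euler numbers, defined by `ℰ_{0,λ}=1` and
`Σ_{l=0}^{n} C(n,l) ℰ_{l,λ} (1)_{n-l,λ} + ℰ_{n,λ} = 0` for `n ≥ 1`. -/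
noncomputable def degE (lam : ℝ) : ℕ → ℝ
  | 0 => 1
  | n + 1 => -(1/2) * ∑ l ∈ (Finset.range (n+1)).attach,
      ((n+1).choose l.1 : ℝ) * degE lam l.1 * fallFac lam 1 (n + 1 - l.1)
  decreasing_by exact Finset.mem_range.mp l.2

/-- Degenerate Euler polynomials `ℰ_{n,λ}(x) = Σ_{l=0}^n C(n,l) ℰ_{l,λ} (x)_{n-l,λ}`. -/
noncomputable def degEP (lam x : ℝ) (n : ℕ) : ℝ :=
  ∑ l ∈ Finset.range (n + 1), (n.choose l : ℝ) * degE lam l * fallFac lam x (n - l)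

/-- Degenerate Bernstein polynomials `B_{k,n}(x|λ)` (vanishing for `k > n`). -/
noncomputable def bern (lam x : ℝ) (k n : ℕ) : ℝ :=
  (n.choose k : ℝ) * fallFac lam x k * fallFac lam (1 - x) (n - k)

/-- Two variable degenerate Bernstein polynomials `B_{k,n}(x₁,x₂|λ)`. -/
noncomputable def bern2 (lam x1 x2 : ℝ) (k n : ℕ) : ℝ :=
  (n.choose k : ℝ) * fallFac lam x1 k * fallFac lam (1 - x2) (n - k)

/-- Higher order degenerate Euler polynomials `ℰ^{(k)}_{n,λ}(x)`. -/
noncomputable def degEPk (lam : ℝ) : ℕ → ℕ → ℝ → ℝ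
  | 0, n, x => fallFac lam x n
  | k + 1, n, x => ∑ m ∈ Finset.range (n + 1),
      (n.choose m : ℝ) * degE lam m * degEPk lam k (n - m) x

/-- The exponential generating function `∑ aₙ tⁿ / n!` of a real sequence, as a formal power
series. -/
noncomputable def egf (a : ℕ → ℝ) : PowerSeries ℝ :=
  PowerSeries.mk fun n => a n / (n.factorial : ℝ)

lemma egf_injective {a b : ℕ → ℝ} (h : egf a = egf b) (n : ℕ) : a n = b n := by
  have := congrArg (PowerSeries.coeff n) h
  simp only [egf, PowerSeries.coeff_mk] at this
  have hn : (n.factorial : ℝ) ≠ 0 := by positivity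
  field_simp at this
  exact this

/-- The product of exponential generating functions is that of the binomial convolution. -/
lemma egf_mul (a b : ℕ → ℝ) :
    egf a * egf b =
      egf fun n => ∑ p ∈ antidiagonal n, (n.choose p.1 : ℝ) * (a p.1 * b p.2) := by
  ext n
  simp only [egf, PowerSeries.coeff_mul, PowerSeries.coeff_mk, Finset.sum_div]
  refine Finset.sum_congr rfl fun p hp => ?_
  obtain rfl := mem_antidiagonal.mp hp
  have h : ((p.1 + p.2).choose p.1 : ℝ) * p.1.factorial * p.2.factorial
      = (p.1 + p.2).factorial := by
    rw [Nat.choose_symm_add]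
    exact_mod_cast Nat.add_choose_mul_factorial_mul_factorial p.1 p.2
  have h1 : (p.1.factorial : ℝ) ≠ 0 := by positivity
  have h2 : (p.2.factorial : ℝ) ≠ 0 := by positivity
  have h3 : ((p.1 + p.2).factorial : ℝ) ≠ 0 := by positivity
  field_simp
  rw [← h]
  ring

/-- Vandermonde identity for `λ`-falling factorials. -/
lemma fallFac_add (lam x y : ℝ) (n : ℕ) :
    fallFac lam (x + y) n =
      ∑ p ∈ antidiagonal n, (n.choose p.1 : ℝ) * (fallFac lam x p.1 * fallFac lam y p.2) := by
  induction n with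
  | zero => simp [fallFac]
  | succ n ih =>
    rw [Finset.sum_antidiagonal_choose_succ_mul
      (fun i j => fallFac lam x i * fallFac lam y j), fallFac, ih, Finset.sum_mul,
      ← Finset.sum_add_distrib]
    refine Finset.sum_congr rfl fun p hp => ?_
    obtain rfl := mem_antidiagonal.mp hp
    -- `x + y - (i + j)λ = (x - iλ) + (y - jλ)` splits each summand into the two Pascal terms.
    rw [← Nat.choose_symm_add (a := p.1) (b := p.2)]
    simp only [fallFac]
    push_cast
    ring

lemma egf_fallFac_add (lam x y : ℝ) :
    egf (fallFac lam (x + y)) = egf (fallFac lam x) * egf (fallFac lam y) := by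
  rw [egf_mul]
  congr 1
  funext n
  exact fallFac_add lam x y n

lemma egf_fallFac_add_nat (lam y : ℝ) (l : ℕ) :
    egf (fallFac lam (y + l)) = egf (fallFac lam y) * egf (fallFac lam 1) ^ l := by
  induction l with
  | zero => simp
  | succ l ih =>
    rw [Nat.cast_succ, ← add_assoc, egf_fallFac_add, ih, pow_succ, mul_assoc]

/-- The recursion for the degenerate Euler numbers: `E (F 1 + 1) = 2`. -/
lemma egf_degE_mul (lam : ℝ) :
    egf (degE lam) * (egf (fallFac lam 1) + 1) = 2 := by
  rw [mul_add, mul_one, egf_mul]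
  ext n
  rw [show (2 : PowerSeries ℝ) = PowerSeries.C 2 from (map_ofNat _ 2).symm, PowerSeries.coeff_C]
  simp only [egf, map_add, PowerSeries.coeff_mk]
  rcases n with _ | n
  · norm_num [degE, fallFac]
  · rw [if_neg (Nat.succ_ne_zero n), ← add_div, Finset.Nat.sum_antidiagonal_eq_sum_range_succ_mk,
      Finset.sum_range_succ, degE,
      Finset.sum_attach (range (n + 1)) fun l =>
        ((n + 1).choose l : ℝ) * degE lam l * fallFac lam 1 (n + 1 - l)]
    simp only [Nat.choose_self, Nat.sub_self, fallFac, ← mul_assoc]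
    push_cast
    ring

lemma egf_degEPk (lam : ℝ) (k : ℕ) (y : ℝ) :
    egf (fun n => degEPk lam k n y) = egf (degE lam) ^ k * egf (fallFac lam y) := by
  induction k with
  | zero => simp [degEPk]
  | succ k ih =>
    rw [pow_succ', mul_assoc, ← ih, egf_mul]
    congr 1
    funext n
    rw [degEPk, Finset.Nat.sum_antidiagonal_eq_sum_range_succ_mk]
    simp only [mul_assoc]

/-- `2 ^ k (y)_{n,λ} = ∑ₗ C(k,l) ℰ^{(k)}_{n,λ}(y + l)`: the theorem without its Bernstein factor. -/
lemma two_pow_mul_fallFac (lam y : ℝ) (n k : ℕ) :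
    (2 : ℝ) ^ k * fallFac lam y n =
      ∑ l ∈ range (k + 1), (k.choose l : ℝ) * degEPk lam k n (y + l) := by
  refine egf_injective (a := fun n => (2 : ℝ) ^ k * fallFac lam y n)
    (b := fun n => ∑ l ∈ range (k + 1), (k.choose l : ℝ) * degEPk lam k n (y + l)) ?_ n
  have hL : egf (fun n => (2 : ℝ) ^ k * fallFac lam y n) = 2 ^ k * egf (fallFac lam y) := by
    ext m
    rw [show (2 : PowerSeries ℝ) = PowerSeries.C 2 from (map_ofNat _ 2).symm, ← map_pow,
      PowerSeries.coeff_C_mul]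
    simp only [egf, PowerSeries.coeff_mk, mul_div_assoc]
  have hR : egf (fun n => ∑ l ∈ range (k + 1), (k.choose l : ℝ) * degEPk lam k n (y + l)) =
      ∑ l ∈ range (k + 1), (k.choose l : PowerSeries ℝ) *
        egf (fun n => degEPk lam k n (y + l)) := by
    ext m
    rw [map_sum]
    simp only [egf, PowerSeries.coeff_mk, Finset.sum_div]
    refine Finset.sum_congr rfl fun l _ => ?_
    rw [show (k.choose l : PowerSeries ℝ) = PowerSeries.C (k.choose l : ℝ) from
      (map_natCast _ _).symm, PowerSeries.coeff_C_mul, PowerSeries.coeff_mk, mul_div_assoc]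
  rw [hL, hR, ← egf_degE_mul lam, mul_pow, add_pow, Finset.mul_sum, Finset.sum_mul]
  refine Finset.sum_congr rfl fun l _ => ?_
  rw [egf_degEPk, egf_fallFac_add_nat]
  ring

/-- Theorem 2.6: `2^k B_{k,n+k}(x|λ) = C(n+k,n) (x)_{k,λ} Σ_{l=0}^k C(k,l) ℰ^{(k)}_{n,λ}(1-x+l)`. -/
theorem bern_higher_degEP (lam x : ℝ) (n k : ℕ) (hn : 0 < n) (hk : 0 < k) :
    (2 : ℝ) ^ k * bern lam x k (n + k) =
      ((n + k).choose n : ℝ) * fallFac lam x k *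
        ∑ l ∈ Finset.range (k + 1), (k.choose l : ℝ) * degEPk lam k n (1 - x + l) := by
  rw [bern, Nat.add_sub_cancel, ← two_pow_mul_fallFac, Nat.choose_symm_add]
  ring
end

section
/- For all real numbers λ, x₁, x₂ and every integer n ≥ 2, Σ_{k=0}^{n} k²·B_{k,n}(x₁,x₂|λ) = n·x₁·(1+x₁−x₂−λ)_{n−1,λ} + n(n−1)·(x₁)_{2,λ}·(1+x₁−x₂−2λ)_{n−2,λ}. -/
/-!
The λ-falling factorials are of binomial type: `∑ C(n,k) (x)_{k,λ} (y)_{n-k,λ} = (x+y)_{n,λ}`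
(`fallFac_vandermonde`). Absorbing a factor `k` into the binomial coefficient,
`k C(n,k) = n C(n-1,k-1)`, together with `(x)_{k,λ} = x (x-λ)_{k-1,λ}`, turns a weighted sum for
`(n, x)` into one for `(n-1, x-λ)` (`sum_mul_absorb`). One absorption reduces the weight `k²` to
`k + 1`; the `1` part is a Vandermonde sum, and the `k` part becomes one after a second absorption.
-/


open Finset

/-- Peels off the first factor `x`, whereas the defining recursion peels off the last one. -/
lemma fallFac_succ_left (lam x : ℝ) (n : ℕ) :
    fallFac lam x (n + 1) = x * fallFac lam (x - lam) n := by
  induction n with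
  | zero => simp [fallFac]
  | succ n ih =>
    rw [fallFac, ih, fallFac]
    push_cast
    ring

/-- The binomial (Vandermonde) identity for λ-falling factorials. -/
lemma fallFac_vandermonde (lam x y : ℝ) (n : ℕ) :
    ∑ k ∈ range (n + 1), (n.choose k : ℝ) * fallFac lam x k * fallFac lam y (n - k) =
      fallFac lam (x + y) n := by
  rw [← Finset.Nat.sum_antidiagonal_eq_sum_range_succ
    (fun i j => (n.choose i : ℝ) * fallFac lam x i * fallFac lam y j)]
  induction n with
  | zero => simp [fallFac]
  | succ n ih =>
    have h := Finset.sum_antidiagonal_choose_succ_mul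
      (fun i j => fallFac lam x i * fallFac lam y j) n
    simp only [← mul_assoc] at h
    rw [h, fallFac, ← ih, sum_mul, ← sum_add_distrib]
    refine sum_congr rfl fun ij hij => ?_
    obtain ⟨i, j⟩ := ij
    obtain rfl : i + j = n := by simpa using hij
    -- The new factor `x + y - (i + j)λ` splits as `(x - iλ) + (y - jλ)`.
    simp only [fallFac]
    rw [show (i + j).choose j = (i + j).choose i from Nat.choose_symm_add.symm]
    push_cast
    ring

/-- Absorption of a factor `k` into the binomial coefficient, with a spectator weight `f`. -/
lemma sum_mul_absorb (lam x y : ℝ) (n : ℕ) (f : ℕ → ℝ) :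
    ∑ k ∈ range (n + 2), f k * k *
        (((n + 1).choose k : ℝ) * fallFac lam x k * fallFac lam y (n + 1 - k)) =
      (n + 1) * x * ∑ k ∈ range (n + 1), f (k + 1) *
        ((n.choose k : ℝ) * fallFac lam (x - lam) k * fallFac lam y (n - k)) := by
  rw [sum_range_succ', mul_sum]
  simp only [Nat.cast_zero, mul_zero, zero_mul, add_zero]
  refine sum_congr rfl fun k _ => ?_
  have h : ((n : ℝ) + 1) * n.choose k = (n + 1).choose (k + 1) * (k + 1) := by
    exact_mod_cast Nat.add_one_mul_choose_eq n k
  rw [fallFac_succ_left, Nat.add_sub_add_right]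
  push_cast
  linear_combination
    -(f (k + 1) * x * fallFac lam (x - lam) k * fallFac lam y (n - k)) * h

/-- `Σ_{k=0}^n k² B_{k,n}(x₁,x₂|λ)
    = n x₁ (1+x₁-x₂-λ)_{n-1,λ} + n(n-1) (x₁)_{2,λ} (1+x₁-x₂-2λ)_{n-2,λ}` for `n ≥ 2`. -/
theorem bern2_sum_sq_mul (lam x1 x2 : ℝ) (n : ℕ) (hn : 2 ≤ n) :
    ∑ k ∈ Finset.range (n + 1), (k : ℝ) ^ 2 * bern2 lam x1 x2 k n =
      (n : ℝ) * x1 * fallFac lam (1 + x1 - x2 - lam) (n - 1) +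
        (n : ℝ) * ((n : ℝ) - 1) * fallFac lam x1 2 * fallFac lam (1 + x1 - x2 - 2 * lam) (n - 2) := by
  obtain ⟨m, rfl⟩ := Nat.exists_eq_add_of_le' hn
  have h1 := sum_mul_absorb lam x1 (1 - x2) (m + 1) (fun k => (k : ℝ))
  have h2 := sum_mul_absorb lam (x1 - lam) (1 - x2) m (fun _ => 1)
  have v1 := fallFac_vandermonde lam (x1 - lam) (1 - x2) (m + 1)
  have v2 := fallFac_vandermonde lam (x1 - lam - lam) (1 - x2) m
  simp only [one_mul] at h2
  rw [v2] at h2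
  simp only [Nat.cast_add, Nat.cast_one, add_mul, one_mul, sum_add_distrib] at h1 h2 v1
  simp only [bern2, pow_two]
  rw [show m + 2 - 1 = m + 1 from rfl, show m + 2 - 2 = m from rfl,
    show 1 + x1 - x2 - lam = x1 - lam + (1 - x2) by ring,
    show 1 + x1 - x2 - 2 * lam = x1 - lam - lam + (1 - x2) by ring]
  rw [h1, h2, v1]
  simp only [fallFac]
  push_cast
  ring
end
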